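/- The composite Ψ ∘ Q : M → S ⊗_R M is zero; that is, for every m ∈ M one has Ψ(Q(m)) = 0, so the image of Q is contained in the kernel of Ψ. -/

import Mathlib

/-!
Setup: `R` a commutative ring, `r ≥ 1`, `a₁, …, a_r ∈ R` with `a 0 = 1`,
`P(X) = ∑_{j=0}^{r} a_j X^{r-j} = X^r + a₁ X^{r-1} + ⋯ + a_r`,
`S = R[X]/(P)` with `x` the class of `X`, and `M` an `S`-module.
`S ⊗[R] M` is an `S`-module via the left tensor factor.
-/

open Polynomial TensorProduct

noncomputable section

variable (R : Type*) [CommRing R] (r : ℕ) (a : ℕ → R)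

/-- The polynomial `P(X) = ∑_{j=0}^{r} a_j X^{r-j}`; when `a 0 = 1` this is
`X^r + a₁ X^{r-1} + ⋯ + a_{r-1} X + a_r`. -/
def specPoly : Polynomial R := ∑ j ∈ Finset.range (r + 1), Polynomial.C (a j) * Polynomial.X ^ (r - j)

/-- `S = R[X]/(P)`. -/
abbrev SpecS := AdjoinRoot (specPoly R r a)

/-- `x ∈ S`, the class of `X`. -/
def specX : SpecS R r a := AdjoinRoot.root _

variable (M : Type*) [AddCommGroup M] [Module R M] [Module (SpecS R r a) M]
  [IsScalarTower R (SpecS R r a) M]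

/-- `ev : S ⊗_R M → M`, `p ⊗ m ↦ p • m`. -/
def specEv : SpecS R r a ⊗[R] M →ₗ[SpecS R r a] M :=
  LinearMap.liftBaseChange _ LinearMap.id

/-- `Ψ : S ⊗_R M → S ⊗_R M`, `q ⊗ m ↦ q ⊗ (x • m) − (x * q) ⊗ m`. -/
def specPsi : SpecS R r a ⊗[R] M →ₗ[SpecS R r a] SpecS R r a ⊗[R] M :=
  LinearMap.baseChange (SpecS R r a)
      ((LinearMap.lsmul (SpecS R r a) M (specX R r a)).restrictScalars R)
    - LinearMap.lsmul (SpecS R r a) (SpecS R r a ⊗[R] M) (specX R r a)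

/-- `Q : M → S ⊗_R M`,
`Q(m) = ∑_{i=0}^{r−1} x^i ⊗ ( ∑_{j=0}^{r−1−i} a_j x^{r−1−i−j} ) • m`. -/
def specQ (m : M) : SpecS R r a ⊗[R] M :=
  ∑ i ∈ Finset.range r,
    ((specX R r a) ^ i) ⊗ₜ[R]
      ((∑ j ∈ Finset.range (r - i),
          algebraMap R (SpecS R r a) (a j) * (specX R r a) ^ (r - 1 - i - j)) • m)

/-- `P(x) = 0` in `S`. -/
theorem specX_rel : ∑ j ∈ Finset.range (r + 1),
    algebraMap R (SpecS R r a) (a j) * (specX R r a) ^ (r - j) = 0 := by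
  have h : AdjoinRoot.mk (specPoly R r a) (specPoly R r a) = 0 := AdjoinRoot.mk_self
  conv at h => lhs; arg 2; unfold specPoly
  rw [map_sum] at h
  simp only [map_mul, map_pow, AdjoinRoot.mk_C, AdjoinRoot.mk_X] at h
  exact h

/-- Horner-type partial sums of `P(x)`. -/
def specB (i : ℕ) : SpecS R r a :=
  ∑ j ∈ Finset.range (r + 1 - i),
    algebraMap R (SpecS R r a) (a j) * (specX R r a) ^ (r - i - j)

theorem specB_succ (i : ℕ) (hi : i < r) :
    specX R r a * specB R r a (i + 1)
      = specB R r a i - algebraMap R (SpecS R r a) (a (r - i)) := by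
  unfold specB
  have e1 : r + 1 - (i + 1) = r - i := by omega
  have e2 : r + 1 - i = (r - i) + 1 := by omega
  rw [e1, e2, Finset.sum_range_succ, Nat.sub_self, pow_zero, mul_one, add_sub_cancel_right,
    Finset.mul_sum]
  refine Finset.sum_congr rfl fun j hj => ?_
  have hj' := Finset.mem_range.mp hj
  have e3 : r - i - j = (r - (i + 1) - j) + 1 := by omega
  rw [e3, pow_succ]
  ring

theorem specPsi_specQ (m : M) : specPsi R r a M (specQ R r a M m) = 0 := by
  have hQ : specQ R r a M m = ∑ i ∈ Finset.range r,
      ((specX R r a) ^ i) ⊗ₜ[R] (specB R r a (i + 1) • m) := by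
    unfold specQ specB
    refine Finset.sum_congr rfl fun i _ => ?_
    have e1 : r + 1 - (i + 1) = r - i := by omega
    have e2 : r - (i + 1) = r - 1 - i := by omega
    rw [e1, e2]
  have hterm : ∀ i ∈ Finset.range r,
      specPsi R r a M (((specX R r a) ^ i) ⊗ₜ[R] (specB R r a (i + 1) • m))
      = -((((specX R r a) ^ (i + 1)) ⊗ₜ[R] (specB R r a (i + 1) • m))
          - (((specX R r a) ^ i) ⊗ₜ[R] (specB R r a i • m)))
        - (algebraMap R (SpecS R r a) (a (r - i)) * (specX R r a) ^ i) ⊗ₜ[R] m := by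
    intro i hi
    have h1 : specPsi R r a M (((specX R r a) ^ i) ⊗ₜ[R] (specB R r a (i + 1) • m))
      = ((specX R r a) ^ i) ⊗ₜ[R] (specX R r a • specB R r a (i + 1) • m)
        - (specX R r a * (specX R r a) ^ i) ⊗ₜ[R] (specB R r a (i + 1) • m) := rfl
    rw [h1, smul_smul, specB_succ R r a i (Finset.mem_range.mp hi), sub_smul, algebraMap_smul,
      TensorProduct.tmul_sub, ← pow_succ', ← Algebra.smul_def, TensorProduct.smul_tmul]
    abel
  have hB0 : specB R r a 0 = 0 := specX_rel R r a
  have hBr : specB R r a r = algebraMap R (SpecS R r a) (a 0) := by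
    unfold specB
    have e : r + 1 - r = 1 := by omega
    rw [e]
    simp
  have hrel := specX_rel R r a
  rw [← Finset.sum_range_reflect, Finset.sum_range_succ] at hrel
  have hs : ∑ i ∈ Finset.range r, algebraMap R (SpecS R r a) (a (r - i)) * (specX R r a) ^ i
      = - (algebraMap R (SpecS R r a) (a 0) * (specX R r a) ^ r) := by
    rw [eq_neg_iff_add_eq_zero, ← hrel]
    congr 1
    · refine Finset.sum_congr rfl fun i hi => ?_
      have hi' := Finset.mem_range.mp hi
      have e1 : r + 1 - 1 - i = r - i := by omega
      have e2 : r - (r - i) = i := by omega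
      rw [e1, e2]
    · have e1 : r + 1 - 1 - r = 0 := by omega
      rw [e1, Nat.sub_zero]
  rw [hQ, map_sum, Finset.sum_congr rfl hterm, Finset.sum_sub_distrib, Finset.sum_neg_distrib,
    Finset.sum_range_sub (fun i => ((specX R r a) ^ i) ⊗ₜ[R] (specB R r a i • m)),
    ← TensorProduct.sum_tmul, hs, hB0, hBr, algebraMap_smul, ← Algebra.smul_def,
    TensorProduct.neg_tmul, TensorProduct.smul_tmul, zero_smul, TensorProduct.tmul_zero]
  abel

/-- The composite `Ψ ∘ Q : M → S ⊗_R M` is zero; in particular the image of `Q` is contained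
in the kernel of `Ψ`. -/
theorem statement_3 (hr : 1 ≤ r) (ha : a 0 = 1) :
    (∀ m : M, specPsi R r a M (specQ R r a M m) = 0) ∧
    Set.range (specQ R r a M) ⊆ {z | specPsi R r a M z = 0} := by
  refine ⟨specPsi_specQ R r a M, ?_⟩
  rintro _ ⟨m, rfl⟩
  exact specPsi_specQ R r a M m
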